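/- arXiv:math/0404424 — 4 statements merged into one kernel-verified Lean document; each statement's English description precedes it below -/
import Mathlib

section
/- Let Ω ⊂ ℝⁿ be a bounded open set, 0 < λ ≤ Λ, γ ≥ 0, K ≥ 0, and let F : S(n) × ℝⁿ × ℝ × Ω̄ × [0,T] → ℝ be continuous, uniformly elliptic with constants λ, Λ, satisfying the structure condition with constant γ and moduli ω_R, and satisfying sup_{(x,t)} |F(0,0,0,x,t)| ≤ K. Then there exists a constant C, depending only on n, λ, Λ, γ, diam(Ω) and K but not on h, such that for every h ∈ (0,1], any z ∈ C(Ω̄) which is a viscosity solution of F(D²z, Dz, z, x, h) + z/h = 0 in Ω with z = 0 on ∂Ω satisfies ‖z‖_{L^∞(Ω)} ≤ C. -/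
/-!
The zeroth-order term `z / h` alone controls `z`, by testing the equation with constants. At an
interior maximum `x₀` of `z`, a constant is an admissible test function, so
`F(0, 0, z x₀, x₀, h) + z x₀ / h ≤ 0`. The modulus in the structure condition enters only through a
positive part, so `F` is nondecreasing in its third argument. If `z x₀ > h K ≥ 0`, this gives
`F(0, 0, z x₀, x₀, h) ≥ F(0, 0, 0, x₀, h) ≥ -K`, a contradiction. Hence `z ≤ h K`; interior minima
give `z ≥ -h K` in the same way, and `h ≤ 1` allows the constant `C = K`.
-/

open scoped RealInnerProductSpace
open MeasureTheory Filter Topology Asymptotics Metric Set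

noncomputable section

abbrev Eucl (d : ℕ) := EuclideanSpace ℝ (Fin d)

open Classical in
noncomputable def eigs {d : ℕ} (M : Matrix (Fin d) (Fin d) ℝ) : Fin d → ℝ :=
  if h : M.IsHermitian then h.eigenvalues else 0

noncomputable def specNorm {d : ℕ} (M : Matrix (Fin d) (Fin d) ℝ) : ℝ := ⨆ i, |eigs M i|
noncomputable def posPartNorm {d : ℕ} (M : Matrix (Fin d) (Fin d) ℝ) : ℝ := ⨆ i, max (eigs M i) 0
noncomputable def negPartNorm {d : ℕ} (M : Matrix (Fin d) (Fin d) ℝ) : ℝ := ⨆ i, max (-(eigs M i)) 0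
noncomputable def posPartTrace {d : ℕ} (M : Matrix (Fin d) (Fin d) ℝ) : ℝ := ∑ i, max (eigs M i) 0
noncomputable def negPartTrace {d : ℕ} (M : Matrix (Fin d) (Fin d) ℝ) : ℝ := ∑ i, max (-(eigs M i)) 0

noncomputable def pucciPlus {d : ℕ} (lam Lam : ℝ) (M : Matrix (Fin d) (Fin d) ℝ) : ℝ :=
  -lam * posPartTrace M + Lam * negPartTrace M

noncomputable def pucciMinus {d : ℕ} (lam Lam : ℝ) (M : Matrix (Fin d) (Fin d) ℝ) : ℝ :=
  -Lam * posPartTrace M + lam * negPartTrace M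

noncomputable def gradAt {d : ℕ} (φ : Eucl d → ℝ) (x : Eucl d) : Eucl d :=
  (EuclideanSpace.equiv (Fin d) ℝ).symm (fun i => fderiv ℝ φ x (EuclideanSpace.single i 1))

noncomputable def hessAt {d : ℕ} (φ : Eucl d → ℝ) (x : Eucl d) : Matrix (Fin d) (Fin d) ℝ :=
  Matrix.of fun i j =>
    fderiv ℝ (fun y => fderiv ℝ φ y (EuclideanSpace.single j 1)) x (EuclideanSpace.single i 1)

noncomputable def quadForm {d : ℕ} (M : Matrix (Fin d) (Fin d) ℝ) (v : Eucl d) : ℝ :=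
  ∑ i, ∑ j, M i j * v i * v j

def ViscSubsol {d : ℕ} (Ω : Set (Eucl d))
    (G : Matrix (Fin d) (Fin d) ℝ → Eucl d → ℝ → Eucl d → ℝ)
    (g : Eucl d → ℝ) (u : Eucl d → ℝ) : Prop :=
  ∀ x₀ ∈ Ω, ∀ φ : Eucl d → ℝ, ContDiffAt ℝ 2 φ x₀ →
    IsLocalMax (fun x => u x - φ x) x₀ →
    G (hessAt φ x₀) (gradAt φ x₀) (u x₀) x₀ ≤ g x₀

def ViscSupersol {d : ℕ} (Ω : Set (Eucl d))
    (G : Matrix (Fin d) (Fin d) ℝ → Eucl d → ℝ → Eucl d → ℝ)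
    (g : Eucl d → ℝ) (u : Eucl d → ℝ) : Prop :=
  ∀ x₀ ∈ Ω, ∀ φ : Eucl d → ℝ, ContDiffAt ℝ 2 φ x₀ →
    IsLocalMin (fun x => u x - φ x) x₀ →
    g x₀ ≤ G (hessAt φ x₀) (gradAt φ x₀) (u x₀) x₀

def ViscSol {d : ℕ} (Ω : Set (Eucl d))
    (G : Matrix (Fin d) (Fin d) ℝ → Eucl d → ℝ → Eucl d → ℝ)
    (g : Eucl d → ℝ) (u : Eucl d → ℝ) : Prop :=
  ViscSubsol Ω G g u ∧ ViscSupersol Ω G g u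

def UniformlyElliptic {d : ℕ} (lam Lam : ℝ) (X : Set (Eucl d)) (Tset : Set ℝ)
    (F : Matrix (Fin d) (Fin d) ℝ → Eucl d → ℝ → Eucl d → ℝ → ℝ) : Prop :=
  ∀ M N : Matrix (Fin d) (Fin d) ℝ, M.IsSymm → N.PosSemidef →
    ∀ (P : Eucl d) (v : ℝ), ∀ x ∈ X, ∀ t ∈ Tset,
      -Lam * specNorm N ≤ F (M + N) P v x t - F M P v x t ∧
      F (M + N) P v x t - F M P v x t ≤ -lam * specNorm N

def IsModulus (σ : ℝ → ℝ) : Prop := Monotone σ ∧ Continuous σ ∧ σ 0 = 0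

def StructureCondition {d : ℕ} (lam Lam gam : ℝ) (ω : ℝ → ℝ → ℝ)
    (X : Set (Eucl d)) (Tset : Set ℝ)
    (F : Matrix (Fin d) (Fin d) ℝ → Eucl d → ℝ → Eucl d → ℝ → ℝ) : Prop :=
  (∀ R > 0, IsModulus (ω R)) ∧
  ∀ R > 0, ∀ M N : Matrix (Fin d) (Fin d) ℝ, M.IsSymm → N.IsSymm →
    ∀ (P Q : Eucl d) (r s : ℝ), |r| ≤ R → |s| ≤ R → ∀ x ∈ X, ∀ t ∈ Tset,
      pucciMinus lam Lam (M - N) - gam * ‖P - Q‖ - ω R (max (s - r) 0)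
          ≤ F M P r x t - F N Q s x t ∧
      F M P r x t - F N Q s x t
          ≤ pucciPlus lam Lam (M - N) + gam * ‖P - Q‖ + ω R (max (r - s) 0)

noncomputable def supConv {d : ℕ} (Ω : Set (Eucl d)) (u : Eucl d → ℝ) (ε : ℝ) (x : Eucl d) : ℝ :=
  sSup ((fun y => u y - ‖x - y‖ ^ 2 / (2 * ε)) '' closure Ω)

noncomputable def infConv {d : ℕ} (Ω : Set (Eucl d)) (u : Eucl d → ℝ) (ε : ℝ) (x : Eucl d) : ℝ :=
  sInf ((fun y => u y + ‖x - y‖ ^ 2 / (2 * ε)) '' closure Ω)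

noncomputable def supNorm {d : ℕ} (Ω : Set (Eucl d)) (u : Eucl d → ℝ) : ℝ :=
  sSup ((fun y => |u y|) '' closure Ω)

def RotheStep {d : ℕ} (Ω : Set (Eucl d))
    (F : Matrix (Fin d) (Fin d) ℝ → Eucl d → ℝ → Eucl d → ℝ → ℝ)
    (h : ℝ) (m : ℕ) (zprev znext : Eucl d → ℝ) : Prop :=
  ContinuousOn znext (closure Ω) ∧
  ViscSol Ω (fun M P r x => F M P r x ((m + 1) * h) + r / h) (fun x => zprev x / h) znext ∧
  ∀ x ∈ frontier Ω, znext x = 0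

noncomputable def rotheInterp {d : ℕ} (z : ℕ → Eucl d → ℝ) (h : ℝ) (x : Eucl d) (t : ℝ) : ℝ :=
  ((⌊t / h⌋₊ + 1 : ℝ) * h - t) / h * z ⌊t / h⌋₊ x + (t - (⌊t / h⌋₊ : ℝ) * h) / h * z (⌊t / h⌋₊ + 1) x

def HasSmoothBoundary {d : ℕ} (Ω : Set (Eucl d)) : Prop :=
  ∃ f : Eucl d → ℝ, ContDiff ℝ (⊤ : ℕ∞) f ∧ Ω = {x | f x < 0} ∧ ∀ x ∈ frontier Ω, fderiv ℝ f x ≠ 0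

def C21 {d : ℕ} (φ : Eucl d → ℝ → ℝ) : Prop :=
  (∀ t, ContDiff ℝ 2 fun x => φ x t) ∧
  (∀ x, ContDiff ℝ 1 fun t => φ x t) ∧
  Continuous (fun p : Eucl d × ℝ => φ p.1 p.2) ∧
  Continuous (fun p : Eucl d × ℝ => hessAt (fun x => φ x p.2) p.1) ∧
  Continuous (fun p : Eucl d × ℝ => gradAt (fun x => φ x p.2) p.1) ∧
  Continuous (fun p : Eucl d × ℝ => deriv (φ p.1) p.2)

def ParabolicViscSubsol {d : ℕ} (Ω : Set (Eucl d)) (T : ℝ)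
    (F : Matrix (Fin d) (Fin d) ℝ → Eucl d → ℝ → Eucl d → ℝ → ℝ)
    (u : Eucl d × ℝ → ℝ) : Prop :=
  ∀ φ : Eucl d → ℝ → ℝ, C21 φ → ∀ ε > (0:ℝ),
    (∀ x ∈ closure Ω, ∀ t ∈ Icc (0:ℝ) T,
      ε ≤ deriv (φ x) t +
        F (hessAt (fun y => φ y t) x) (gradAt (fun y => φ y t) x) (φ x t) x t) →
    ¬ ∃ p ∈ Ω ×ˢ Ioc (0:ℝ) T,
        IsLocalMaxOn (fun q : Eucl d × ℝ => u q - φ q.1 q.2) (Ω ×ˢ Ioc (0:ℝ) T) p ∧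
        u p - φ p.1 p.2 = 0

def ParabolicViscSupersol {d : ℕ} (Ω : Set (Eucl d)) (T : ℝ)
    (F : Matrix (Fin d) (Fin d) ℝ → Eucl d → ℝ → Eucl d → ℝ → ℝ)
    (u : Eucl d × ℝ → ℝ) : Prop :=
  ∀ φ : Eucl d → ℝ → ℝ, C21 φ → ∀ ε > (0:ℝ),
    (∀ x ∈ closure Ω, ∀ t ∈ Icc (0:ℝ) T,
      deriv (φ x) t +
        F (hessAt (fun y => φ y t) x) (gradAt (fun y => φ y t) x) (φ x t) x t ≤ -ε) →
    ¬ ∃ p ∈ Ω ×ˢ Ioc (0:ℝ) T,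
        IsLocalMinOn (fun q : Eucl d × ℝ => u q - φ q.1 q.2) (Ω ×ˢ Ioc (0:ℝ) T) p ∧
        u p - φ p.1 p.2 = 0

section SemicontinuousExtrema

variable {X α : Type*} [TopologicalSpace X] [LinearOrder α] {s : Set X} {f : X → α} {c : α} {x : X}

lemma exists_mem_isMaxOn_closure (hs : IsOpen s) (hcpt : IsCompact (closure s))
    (hf : UpperSemicontinuousOn f (closure s)) (hfr : ∀ y ∈ frontier s, f y ≤ c)
    (hx : x ∈ closure s) (hcx : c < f x) : ∃ x₀ ∈ s, IsMaxOn f (closure s) x₀ := by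
  obtain ⟨x₀, hx₀, hmax⟩ := hf.exists_isMaxOn ⟨x, hx⟩ hcpt
  refine ⟨x₀, ?_, hmax⟩
  by_contra hmem
  have hx₀fr : x₀ ∈ frontier s := hs.frontier_eq ▸ ⟨hx₀, hmem⟩
  exact (hcx.trans_le (hmax hx)).not_ge (hfr x₀ hx₀fr)

lemma exists_mem_isMinOn_closure (hs : IsOpen s) (hcpt : IsCompact (closure s))
    (hf : LowerSemicontinuousOn f (closure s)) (hfr : ∀ y ∈ frontier s, c ≤ f y)
    (hx : x ∈ closure s) (hcx : f x < c) : ∃ x₀ ∈ s, IsMinOn f (closure s) x₀ :=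
  exists_mem_isMaxOn_closure (α := αᵒᵈ) hs hcpt hf hfr hx hcx

end SemicontinuousExtrema

section ConstantTestFunctions

variable {d : ℕ} {Ω : Set (Eucl d)} {G : Matrix (Fin d) (Fin d) ℝ → Eucl d → ℝ → Eucl d → ℝ}
  {g u : Eucl d → ℝ} {c : ℝ} {x : Eucl d}

lemma gradAt_const (c : ℝ) (x : Eucl d) : gradAt (fun _ => c) x = 0 := by
  ext i
  simp [gradAt]

lemma hessAt_const (c : ℝ) (x : Eucl d) : hessAt (fun _ => c) x = 0 := by
  ext i j
  simp [hessAt]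

lemma ViscSubsol.le_of_isLocalMax (hu : ViscSubsol Ω G g u) (hx : x ∈ Ω) (hmax : IsLocalMax u x) :
    G 0 0 (u x) x ≤ g x := by
  simpa only [gradAt_const, hessAt_const] using
    hu x hx (fun _ => 0) contDiffAt_const (by simpa only [sub_zero] using hmax)

lemma ViscSupersol.le_of_isLocalMin (hu : ViscSupersol Ω G g u) (hx : x ∈ Ω)
    (hmin : IsLocalMin u x) : g x ≤ G 0 0 (u x) x := by
  simpa only [gradAt_const, hessAt_const] using
    hu x hx (fun _ => 0) contDiffAt_const (by simpa only [sub_zero] using hmin)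

lemma ViscSubsol.le_of_frontier_le (hu : ViscSubsol Ω G g u) (hΩ : IsOpen Ω)
    (hbdd : Bornology.IsBounded Ω) (husc : UpperSemicontinuousOn u (closure Ω))
    (hfr : ∀ y ∈ frontier Ω, u y ≤ c) (hG : ∀ y ∈ Ω, ∀ r > c, g y < G 0 0 r y)
    (hx : x ∈ closure Ω) : u x ≤ c := by
  by_contra! hcx
  obtain ⟨x₀, hx₀, hmax⟩ := exists_mem_isMaxOn_closure hΩ hbdd.isCompact_closure husc hfr hx hcx
  have hloc : IsLocalMax u x₀ :=
    hmax.isLocalMax (mem_of_superset (hΩ.mem_nhds hx₀) subset_closure)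
  exact (hG x₀ hx₀ (u x₀) (hcx.trans_le (hmax hx))).not_ge (hu.le_of_isLocalMax hx₀ hloc)

lemma ViscSupersol.le_of_le_frontier (hu : ViscSupersol Ω G g u) (hΩ : IsOpen Ω)
    (hbdd : Bornology.IsBounded Ω) (hlsc : LowerSemicontinuousOn u (closure Ω))
    (hfr : ∀ y ∈ frontier Ω, c ≤ u y) (hG : ∀ y ∈ Ω, ∀ r < c, G 0 0 r y < g y)
    (hx : x ∈ closure Ω) : c ≤ u x := by
  by_contra! hcx
  obtain ⟨x₀, hx₀, hmin⟩ := exists_mem_isMinOn_closure hΩ hbdd.isCompact_closure hlsc hfr hx hcx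
  have hloc : IsLocalMin u x₀ :=
    hmin.isLocalMin (mem_of_superset (hΩ.mem_nhds hx₀) subset_closure)
  exact (hG x₀ hx₀ (u x₀) ((hmin hx).trans_lt hcx)).not_ge (hu.le_of_isLocalMin hx₀ hloc)

end ConstantTestFunctions

section StructureCondition

variable {d : ℕ}

lemma eigs_zero : eigs (0 : Matrix (Fin d) (Fin d) ℝ) = 0 := by
  rw [eigs, dif_pos Matrix.isHermitian_zero, Matrix.IsHermitian.eigenvalues_eq_zero_iff]

lemma pucciMinus_zero (lam Lam : ℝ) :
    pucciMinus lam Lam (0 : Matrix (Fin d) (Fin d) ℝ) = 0 := by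
  simp [pucciMinus, posPartTrace, negPartTrace, eigs_zero]

lemma StructureCondition.monotone {lam Lam gam : ℝ} {ω : ℝ → ℝ → ℝ} {X : Set (Eucl d)}
    {Tset : Set ℝ} {F : Matrix (Fin d) (Fin d) ℝ → Eucl d → ℝ → Eucl d → ℝ → ℝ}
    (hF : StructureCondition lam Lam gam ω X Tset F) {M : Matrix (Fin d) (Fin d) ℝ}
    (hM : M.IsSymm) (P : Eucl d) {x : Eucl d} (hx : x ∈ X) {t : ℝ} (ht : t ∈ Tset) :
    Monotone fun r => F M P r x t := by
  intro s r hsr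
  obtain ⟨R, hr, hs⟩ : ∃ R, |r| < R ∧ |s| < R := by
    simpa only [max_lt_iff] using exists_gt (max |r| |s|)
  have hR : 0 < R := (abs_nonneg r).trans_lt hr
  have hω : ω R (max (s - r) 0) = 0 := by
    rw [max_eq_right (sub_nonpos.2 hsr), (hF.1 R hR).2.2]
  have hdiff := (hF.2 R hR M M hM hM P P r s hr.le hs.le x hx t ht).1
  simpa only [sub_self, pucciMinus_zero, norm_zero, mul_zero, hω, sub_nonneg] using hdiff

end StructureCondition

theorem first_bound_general {d : ℕ} {K h : ℝ} {Ω : Set (Eucl d)}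
    {G : Matrix (Fin d) (Fin d) ℝ → Eucl d → ℝ → Eucl d → ℝ} {z : Eucl d → ℝ}
    (hΩopen : IsOpen Ω) (hΩbdd : Bornology.IsBounded Ω) (hh : 0 < h)
    (hG : ∀ x ∈ Ω, Monotone fun r => G 0 0 r x) (hGK : ∀ x ∈ Ω, |G 0 0 0 x| ≤ K)
    (hz : ContinuousOn z (closure Ω))
    (hsol : ViscSol Ω (fun M P r x => G M P r x + r / h) (fun _ => 0) z)
    (hz0 : ∀ x ∈ frontier Ω, z x = 0) : ∀ x ∈ closure Ω, |z x| ≤ h * K := by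
  intro x hx
  obtain ⟨y₀, hy₀⟩ : Ω.Nonempty := closure_nonempty_iff.1 ⟨x, hx⟩
  have hhK : 0 ≤ h * K := mul_nonneg hh.le ((abs_nonneg _).trans (hGK y₀ hy₀))
  have hpos : ∀ y ∈ Ω, ∀ r > h * K, 0 < G 0 0 r y + r / h := by
    intro y hy r hr
    have hmono : G 0 0 0 y ≤ G 0 0 r y := hG y hy (hhK.trans hr.le)
    have hrh : K < r / h := (lt_div_iff₀' hh).2 hr
    linarith [(abs_le.1 (hGK y hy)).1]
  have hneg : ∀ y ∈ Ω, ∀ r < -(h * K), G 0 0 r y + r / h < 0 := by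
    intro y hy r hr
    have hmono : G 0 0 r y ≤ G 0 0 0 y := hG y hy (by linarith)
    have hrh : r / h < -K := (div_lt_iff₀' hh).2 (by rwa [mul_neg])
    linarith [(abs_le.1 (hGK y hy)).2]
  refine abs_le.2 ⟨?_, ?_⟩
  · exact hsol.2.le_of_le_frontier hΩopen hΩbdd hz.lowerSemicontinuousOn
      (fun y hy => by simpa only [hz0 y hy, neg_nonpos] using hhK) hneg hx
  · exact hsol.1.le_of_frontier_le hΩopen hΩbdd hz.upperSemicontinuousOn
      (fun y hy => (hz0 y hy).trans_le hhK) hpos hx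

/-- **First Bound.**  There is a constant `C` depending only on `d, λ, Λ, γ, Ω` (through its
diameter) and `K`, but not on `h` (nor on `F`, `T`), such that for every `h ∈ (0,1]` any
continuous viscosity solution `z` of `F(D²z, Dz, z, x, h) + z/h = 0` in `Ω` with `z = 0` on
`∂Ω` satisfies `‖z‖_{L^∞(Ω)} ≤ C`. -/
theorem first_bound (d : ℕ) (lam Lam gam K : ℝ)
    (hlam : 0 < lam) (hlL : lam ≤ Lam) (hgam : 0 ≤ gam) (hK : 0 ≤ K)
    (Ω : Set (Eucl d)) (hΩopen : IsOpen Ω) (hΩbdd : Bornology.IsBounded Ω) :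
    ∃ C : ℝ, ∀ T > (0:ℝ),
      ∀ F : Matrix (Fin d) (Fin d) ℝ → Eucl d → ℝ → Eucl d → ℝ → ℝ, ∀ ω : ℝ → ℝ → ℝ,
        ContinuousOn
          (fun q : Matrix (Fin d) (Fin d) ℝ × Eucl d × ℝ × Eucl d × ℝ =>
            F q.1 q.2.1 q.2.2.1 q.2.2.2.1 q.2.2.2.2)
          (univ ×ˢ univ ×ˢ univ ×ˢ closure Ω ×ˢ Icc 0 T) →
        UniformlyElliptic lam Lam (closure Ω) (Icc 0 T) F →
        StructureCondition lam Lam gam ω (closure Ω) (Icc 0 T) F →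
        (∀ x ∈ closure Ω, ∀ t ∈ Icc (0:ℝ) T, |F 0 0 0 x t| ≤ K) →
        ∀ h : ℝ, h ∈ Ioc (0:ℝ) 1 → h ≤ T →
          ∀ z : Eucl d → ℝ, ContinuousOn z (closure Ω) →
            ViscSol Ω (fun M P r x => F M P r x h + r / h) (fun _ => 0) z →
            (∀ x ∈ frontier Ω, z x = 0) →
            ∀ x ∈ closure Ω, |z x| ≤ C := by
  refine ⟨K, fun T _ F ω _ _ hF hFK h hh hhT z hz hsol hz0 x hx => ?_⟩
  have ht : h ∈ Icc 0 T := ⟨hh.1.le, hhT⟩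
  exact (first_bound_general hΩopen hΩbdd hh.1
    (fun y hy => hF.monotone Matrix.isSymm_zero 0 (subset_closure hy) ht)
    (fun y hy => hFK y (subset_closure hy) h ht) hz hsol hz0 x hx).trans
    (mul_le_of_le_one_left hK hh.2)

end
end

section
/- Let Ω ⊂ ℝⁿ be a bounded open set, let u : Ω̄ → ℝ be continuous, and let ε > 0. Then for Lebesgue-almost every x ∈ Ω there exist a vector p ∈ ℝⁿ and a symmetric matrix M^ε(x) such that u^ε(y) = u^ε(x) + ⟨p, y-x⟩ + (1/2)⟨M^ε(x)(y-x), y-x⟩ + o(|y-x|²) as y → x, and moreover M^ε(x) ≥ -(1/ε)I in the sense of symmetric matrices. Similarly, for almost every x ∈ Ω the inf-convolution u_ε admits such a second-order expansion with a symmetric matrix M_ε(x) satisfying M_ε(x) ≤ (1/ε)I. -/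
/-!
Every function `x ↦ u y - ‖x - y‖² / (2ε)` becomes affine after adding `‖x‖² / (2ε)`, so the
sup-convolution plus `‖x‖² / (2ε)` is a supremum of affine functions, hence convex. The
expansion of `u^ε` is then Alexandrov's theorem, and that of the inf-convolution follows
since it is minus the sup-convolution of `-u`.

For Alexandrov's theorem, let `s` select a subgradient of the convex function `f` at every point.
Since `s` is monotone, `id + s` does not decrease distances and has a 1-Lipschitz left inverse `J`,
defined on the whole space. By Rademacher's theorem and Sard's lemma, almost every `x` has the
property that `J` is differentiable with invertible derivative at every point it maps to `x`;
by the inverse function rule, `s` is differentiable at such an `x` as soon as it is continuous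
there, which is the case wherever `f` is differentiable, so almost everywhere. Integrating `s`
along segments issued from `x` gives the expansion of `f`, with Hessian the symmetric part of the
derivative of `s`.
-/

open scoped RealInnerProductSpace
open MeasureTheory Filter Topology Asymptotics Metric Set

noncomputable section

/-- `HasSecondOrderExpansionAt f x p M` means
`f(y) = f(x) + ⟨p, y-x⟩ + ½⟨M(y-x), y-x⟩ + o(|y-x|²)` as `y → x`. -/
def HasSecondOrderExpansionAt {d : ℕ} (f : Eucl d → ℝ) (x : Eucl d)
    (p : Eucl d) (M : Matrix (Fin d) (Fin d) ℝ) : Prop :=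
  (fun y => f y - (f x + ⟪p, y - x⟫ + (1 / 2) * quadForm M (y - x)))
    =o[nhds x] fun y => ‖y - x‖ ^ 2

/-! ### Differentiability of monotone maps -/

section Monotone

variable {E F : Type*} [NormedAddCommGroup E] [NormedSpace ℝ E] [FiniteDimensional ℝ E]
  [MeasurableSpace E] [BorelSpace E] [NormedAddCommGroup F] [NormedSpace ℝ F]
  [FiniteDimensional ℝ F] (μ : Measure E) [μ.IsAddHaarMeasure]

lemma ae_differentiableAt_of_locallyLipschitz {f : E → F} (hf : LocallyLipschitz f) :
    ∀ᵐ x ∂μ, DifferentiableAt ℝ f x := by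
  refine measure_null_of_locally_null _ fun x _ => ?_
  obtain ⟨K, t, ht, hK⟩ := hf x
  refine ⟨{y | ¬ DifferentiableAt ℝ f y} ∩ interior t,
    inter_mem self_mem_nhdsWithin (mem_nhdsWithin_of_mem_nhds (interior_mem_nhds.2 ht)), ?_⟩
  refine measure_mono_null ?_ hK.ae_differentiableWithinAt_of_mem
  rintro y ⟨hy, hyt⟩ hdiff
  exact hy ((hdiff (interior_subset hyt)).differentiableAt (mem_interior_iff_mem_nhds.1 hyt))

lemma addHaar_image_eq_zero_of_lipschitzWith {g : E → E} {K : NNReal} {s : Set E}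
    (hg : LipschitzWith K g) (hs : μ s = 0) : μ (g '' s) = 0 := by
  set ν : Measure E := Measure.hausdorffMeasure (Module.finrank ℝ E)
  have hνs : ν s = 0 := Measure.absolutelyContinuous_isAddHaarMeasure ν μ hs
  have hνg : ν (g '' s) ≤ 0 := by
    simpa [ν, hνs] using hg.hausdorffMeasure_image_le (Nat.cast_nonneg (Module.finrank ℝ E)) s
  exact Measure.absolutelyContinuous_isAddHaarMeasure μ ν (nonpos_iff_eq_zero.1 hνg)

lemma ae_forall_preimage_det_fderiv_ne_zero {g : E → E} {K : NNReal} (hg : LipschitzWith K g) :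
    ∀ᵐ x ∂μ, ∀ w, g w = x → DifferentiableAt ℝ g w ∧ (fderiv ℝ g w).det ≠ 0 := by
  have hndiff : μ (g '' {w | ¬ DifferentiableAt ℝ g w}) = 0 :=
    addHaar_image_eq_zero_of_lipschitzWith μ hg hg.ae_differentiableAt
  have hcrit : μ (g '' {w | DifferentiableAt ℝ g w ∧ (fderiv ℝ g w).det = 0}) = 0 :=
    addHaar_image_eq_zero_of_det_fderivWithin_eq_zero μ
      (fun w hw => hw.1.hasFDerivAt.hasFDerivWithinAt) fun w hw => hw.2
  filter_upwards [measure_eq_zero_iff_ae_notMem.1 hndiff, measure_eq_zero_iff_ae_notMem.1 hcrit]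
    with x hx hx' w hw
  have hdiff : DifferentiableAt ℝ g w := not_not.1 fun h => hx ⟨w, h, hw⟩
  exact ⟨hdiff, fun h => hx' ⟨w, ⟨hdiff, h⟩, hw⟩⟩

theorem ae_differentiableAt_of_antilipschitzWith {g : E → E} {K : NNReal}
    (hg : AntilipschitzWith K g) : ∀ᵐ x ∂μ, ContinuousAt g x → DifferentiableAt ℝ g x := by
  have hleft : Function.LeftInverse (Function.invFun g) g :=
    Function.leftInverse_invFun hg.injective
  have hinv : LipschitzOnWith K (Function.invFun g) (range g) := by
    rintro _ ⟨x, rfl⟩ _ ⟨y, rfl⟩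
    simpa only [hleft x, hleft y] using hg x y
  obtain ⟨J, hJ, hJg⟩ := hinv.extend_finite_dimension
  have hJleft : ∀ x, J (g x) = x := fun x => (hJg (mem_range_self x)).symm.trans (hleft x)
  filter_upwards [ae_forall_preimage_det_fderiv_ne_zero μ hJ] with x hx hcont
  obtain ⟨hdiff, hdet⟩ := hx (g x) (hJleft x)
  exact (HasFDerivAt.of_local_left_inverse
    (f' := (fderiv ℝ J (g x)).toContinuousLinearEquivOfDetNeZero hdet) hcont hdiff.hasFDerivAt
    (.of_forall hJleft)).differentiableAt

end Monotone

section InnerProduct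

variable {E : Type*} [NormedAddCommGroup E] [InnerProductSpace ℝ E]

lemma antilipschitzWith_id_add_of_monotone {s : E → E}
    (hs : ∀ x y, 0 ≤ ⟪s x - s y, x - y⟫) : AntilipschitzWith 1 fun x => x + s x := by
  refine AntilipschitzWith.of_le_mul_dist fun x y => ?_
  rw [NNReal.coe_one, one_mul, dist_eq_norm, dist_eq_norm]
  have hsq : ‖x - y‖ ^ 2 ≤ ⟪x + s x - (y + s y), x - y⟫ := by
    rw [add_sub_add_comm, inner_add_left, real_inner_self_eq_norm_sq]
    exact le_add_of_nonneg_right (hs x y)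
  have hCS := hsq.trans (real_inner_le_norm _ _)
  by_contra! hlt
  nlinarith [norm_nonneg (x + s x - (y + s y))]

theorem ae_differentiableAt_of_monotone [FiniteDimensional ℝ E] [MeasurableSpace E] [BorelSpace E]
    (μ : Measure E) [μ.IsAddHaarMeasure] {s : E → E} (hs : ∀ x y, 0 ≤ ⟪s x - s y, x - y⟫) :
    ∀ᵐ x ∂μ, ContinuousAt s x → DifferentiableAt ℝ s x := by
  filter_upwards [ae_differentiableAt_of_antilipschitzWith μ
    (antilipschitzWith_id_add_of_monotone hs)] with x hx hcont
  simpa using (hx (continuousAt_id.add hcont)).sub differentiableAt_id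

lemma inner_fderiv_nonneg_of_monotone {s : E → E} {A : E →L[ℝ] E} {x : E}
    (hs : ∀ x y, 0 ≤ ⟪s x - s y, x - y⟫) (hA : HasFDerivAt s A x) (v : E) : 0 ≤ ⟪A v, v⟫ := by
  have hlim : Tendsto (fun t : ℝ => ⟪t⁻¹ • (s (x + t • v) - s x), v⟫) (𝓝[≠] 0) (𝓝 ⟪A v, v⟫) :=
    (hA.hasLineDerivAt v).tendsto_slope_zero.inner tendsto_const_nhds
  refine ge_of_tendsto hlim (eventually_mem_nhdsWithin.mono fun t ht => ?_)
  have hmono := hs (x + t • v) x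
  rw [add_sub_cancel_left, inner_smul_right] at hmono
  have hscale : ⟪t⁻¹ • (s (x + t • v) - s x), v⟫ = (t⁻¹) ^ 2 * (t * ⟪s (x + t • v) - s x, v⟫) := by
    rw [real_inner_smul_left]
    field_simp [show t ≠ 0 from ht]
  exact hscale ▸ mul_nonneg (sq_nonneg _) hmono

end InnerProduct

/-! ### Subgradients -/

/-- The vector `η` is a subgradient of `f` at `x`: the affine function of slope `η` through
`(x, f x)` supports the graph of `f` from below on the whole space. -/
def IsSubgradientAt {E : Type*} [NormedAddCommGroup E] [InnerProductSpace ℝ E]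
    (f : E → ℝ) (η x : E) : Prop :=
  ∀ y, f x + ⟪η, y - x⟫ ≤ f y

section Subgradient

variable {E : Type*} [NormedAddCommGroup E] [InnerProductSpace ℝ E] {f : E → ℝ}

lemma IsSubgradientAt.inner_sub_nonneg {x y η ζ : E} (hη : IsSubgradientAt f η x)
    (hζ : IsSubgradientAt f ζ y) : 0 ≤ ⟪η - ζ, x - y⟫ := by
  have hxy := hη y
  rw [← neg_sub x y, inner_neg_right] at hxy
  rw [inner_sub_left]
  linarith [hζ x]

theorem exists_isSubgradientAt [CompleteSpace E] (hf : ConvexOn ℝ univ f) (hfc : Continuous f)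
    (x : E) : ∃ η, IsSubgradientAt f η x := by
  have hconv : Convex ℝ {q : E × ℝ | f q.1 < q.2} := by simpa using hf.convex_strict_epigraph
  have hopen : IsOpen {q : E × ℝ | f q.1 < q.2} :=
    isOpen_lt (hfc.comp continuous_fst) continuous_snd
  obtain ⟨F, hF⟩ := geometric_hahn_banach_open_point (x := (x, f x)) hconv hopen (lt_irrefl (f x))
  set l : StrongDual ℝ E := F.comp (.inl ℝ E ℝ)
  set c : ℝ := F (0, 1)
  have hFlc (y : E) (t : ℝ) : F (y, t) = l y + t * c := by
    rw [← smul_eq_mul, ← map_smul, ContinuousLinearMap.comp_apply, ← map_add]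
    simp
  have hsep {y : E} {t : ℝ} (ht : f y < t) : l y + t * c < l x + f x * c := by
    simpa only [hFlc] using hF (y, t) ht
  have hc : c < 0 := by linarith [hsep (lt_add_one (f x))]
  refine ⟨(InnerProductSpace.toDual ℝ E).symm ((-c)⁻¹ • l), fun y => ?_⟩
  rw [InnerProductSpace.toDual_symm_apply]
  refine le_of_forall_gt_imp_ge_of_dense fun t ht => ?_
  have hslope : (-c)⁻¹ * (l y - l x) ≤ t - f x := by
    rw [inv_mul_le_iff₀ (neg_pos.2 hc)]
    linarith [hsep ht]
  simpa [← le_sub_iff_add_le'] using hslope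

lemma IsSubgradientAt.mul_norm_sub_le {η p y : E} {a ρ C : ℝ} (hη : IsSubgradientAt f η y)
    (hρ : 0 ≤ ρ) (hC : ∀ z ∈ closedBall y ρ, |f z - (a + ⟪p, z⟫)| ≤ C) :
    ρ * ‖η - p‖ ≤ 2 * C := by
  set v : E := (ρ * ‖η - p‖⁻¹) • (η - p)
  have hv : ‖v‖ ≤ ρ := by
    rw [norm_smul, norm_mul, norm_inv, norm_norm, Real.norm_of_nonneg hρ, mul_assoc]
    exact mul_le_of_le_one_right hρ inv_mul_le_one
  have hinner : ⟪η - p, v⟫ = ρ * ‖η - p‖ := by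
    rw [real_inner_smul_right, real_inner_self_eq_norm_sq, mul_assoc, pow_two,
      ← mul_assoc ‖η - p‖⁻¹, inv_mul_mul_self]
  have hy := hη (y + v)
  have hCy := (abs_le.1 (hC y (mem_closedBall_self hρ))).1
  have hCv := (abs_le.1 (hC (y + v) (by simpa using hv))).2
  rw [inner_add_right] at hCv
  rw [add_sub_cancel_left] at hy
  rw [inner_sub_left] at hinner
  linarith

theorem tendsto_subgradient_of_hasGradientAt [CompleteSpace E] {s : E → E} {x p : E}
    (hs : ∀ y, IsSubgradientAt f (s y) y) (hf : HasGradientAt f p x) :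
    Tendsto s (𝓝 x) (𝓝 p) := by
  refine Metric.tendsto_nhds.2 fun δ hδ => ?_
  have hlittle := (hasGradientAt_iff_isLittleO.1 hf).def (show 0 < δ / 8 by positivity)
  obtain ⟨r, hr, hball⟩ := Metric.eventually_nhds_iff_ball.1 hlittle
  filter_upwards [ball_mem_nhds x (half_pos hr)] with y hy
  have hsub : closedBall y (r / 2) ⊆ ball x r :=
    closedBall_subset_ball' (by linarith [mem_ball.1 hy])
  have hC : ∀ z ∈ closedBall y (r / 2), |f z - (f x - ⟪p, x⟫ + ⟪p, z⟫)| ≤ δ / 8 * r := by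
    intro z hz
    have hfz := hball z (hsub hz)
    rw [Real.norm_eq_abs, inner_sub_right] at hfz
    refine (le_of_eq ?_).trans (hfz.trans ?_)
    · congr 1; ring
    · gcongr
      exact (mem_ball_iff_norm.1 (hsub hz)).le
  have hbound := (hs y).mul_norm_sub_le (half_pos hr).le hC
  rw [dist_eq_norm]
  nlinarith

theorem continuousAt_subgradient_of_differentiableAt [CompleteSpace E] {s : E → E} {x : E}
    (hs : ∀ y, IsSubgradientAt f (s y) y) (hf : DifferentiableAt ℝ f x) : ContinuousAt s x :=
  continuousAt_of_tendsto_nhds (tendsto_subgradient_of_hasGradientAt hs hf.hasGradientAt)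

end Subgradient

/-! ### Second-order expansions -/

lemma sub_le_mul_of_sub_le_add_sq {φ : ℝ → ℝ} {a b c K : ℝ} (hab : a ≤ b)
    (hφ : ContinuousOn φ (Icc a b))
    (h : ∀ r ∈ Icc a b, ∀ t ∈ Icc r b, φ t - φ r ≤ c * (t - r) + K * (t - r) ^ 2) :
    φ b - φ a ≤ c * (b - a) := by
  have hslope {r t : ℝ} (hr : r ∈ Ico a b) (ht : t ∈ Ioo r b) :
      slope φ r t ≤ c + K * (t - r) := by
    rw [slope_def_field, div_le_iff₀ (sub_pos.2 ht.1)]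
    linarith [h r (Ico_subset_Icc_self hr) t (Ioo_subset_Icc_self ht)]
  have hlim (r : ℝ) : Tendsto (fun t => c + K * (t - r)) (𝓝[>] r) (𝓝 c) :=
    (Continuous.tendsto' (by fun_prop) r c (by simp)).mono_left nhdsWithin_le_nhds
  have hfence := image_le_of_liminf_slope_right_le_deriv_boundary (B := fun t => φ a + c * (t - a))
    (B' := fun _ => c) hφ (by simp) (by fun_prop)
    (fun t _ => by
      simpa using (((hasDerivWithinAt_id t _).sub_const a).const_mul c).const_add (φ a))
    (fun r hr m hm => Eventually.frequently <| by
      filter_upwards [(hlim r).eventually_lt_const hm, Ioo_mem_nhdsGT hr.2] with t htm ht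
      exact (hslope hr ht).trans_lt htm)
  linarith [hfence (right_mem_Icc.2 hab)]

lemma abs_sub_le_of_subgradient_near_affine {φ σ : ℝ → ℝ} {a b δ : ℝ} (hφ : Continuous φ)
    (hσ : ∀ r t, φ r + σ r * (t - r) ≤ φ t)
    (hδ : ∀ t ∈ Icc (0 : ℝ) 1, |σ t - (a + t * b)| ≤ δ) :
    |φ 1 - (φ 0 + a + 1 / 2 * b)| ≤ δ := by
  set q : ℝ → ℝ := fun t => a * t + b / 2 * t ^ 2
  have hq : Continuous q := by fun_prop
  have hupper := sub_le_mul_of_sub_le_add_sq (φ := φ - q) (c := δ) (K := b / 2) zero_le_one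
    (hφ.sub hq).continuousOn fun r hr t ht => by
      have hδt := (abs_le.1 (hδ t ⟨hr.1.trans ht.1, ht.2⟩)).2
      simp only [Pi.sub_apply, q]
      nlinarith [hσ t r, mul_le_mul_of_nonneg_right hδt (sub_nonneg.2 ht.1)]
  have hlower := sub_le_mul_of_sub_le_add_sq (φ := q - φ) (c := δ) (K := b / 2) zero_le_one
    (hq.sub hφ).continuousOn fun r hr t ht => by
      have hδr := (abs_le.1 (hδ r hr)).1
      simp only [Pi.sub_apply, q]
      nlinarith [hσ r t, mul_le_mul_of_nonneg_right hδr (sub_nonneg.2 ht.1)]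
  simp only [Pi.sub_apply, q] at hupper hlower
  exact abs_le.2 ⟨by linarith, by linarith⟩

/-- `f y = f x + ⟪p, y - x⟫ + ½ ⟪A (y - x), y - x⟫ + o(‖y - x‖²)` as `y → x`: the coordinate-free
counterpart of `HasSecondOrderExpansionAt`. The operator `A` is not required to be symmetric. -/
def HasQuadraticExpansionAt {E : Type*} [NormedAddCommGroup E] [InnerProductSpace ℝ E]
    (f : E → ℝ) (x p : E) (A : E →L[ℝ] E) : Prop :=
  (fun y => f y - (f x + ⟪p, y - x⟫ + 1 / 2 * ⟪A (y - x), y - x⟫)) =o[𝓝 x] fun y => ‖y - x‖ ^ 2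

section Expansion

variable {E : Type*} [NormedAddCommGroup E] [InnerProductSpace ℝ E] {f : E → ℝ} {x p : E}
  {A : E →L[ℝ] E}

theorem hasQuadraticExpansionAt_of_hasFDerivAt_subgradient {s : E → E} (hf : Continuous f)
    (hs : ∀ y, IsSubgradientAt f (s y) y) (hA : HasFDerivAt s A x) :
    HasQuadraticExpansionAt f x (s x) A := by
  refine isLittleO_iff.2 fun c hc => ?_
  obtain ⟨r, hr, hball⟩ := Metric.eventually_nhds_iff_ball.1 (hA.isLittleO.def hc)
  filter_upwards [ball_mem_nhds x hr] with y hy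
  set v : E := y - x
  have hv : ‖v‖ < r := mem_ball_iff_norm.1 hy
  have hsub : ∀ a t : ℝ, f (x + a • v) + ⟪s (x + a • v), v⟫ * (t - a) ≤ f (x + t • v) := by
    intro a t
    have hline := hs (x + a • v) (x + t • v)
    rwa [add_sub_add_left_eq_sub, ← sub_smul, real_inner_smul_right, mul_comm] at hline
  have hclose : ∀ t ∈ Icc (0 : ℝ) 1,
      |⟪s (x + t • v), v⟫ - (⟪s x, v⟫ + t * ⟪A v, v⟫)| ≤ c * ‖v‖ ^ 2 := by
    intro t ht
    have htv : ‖t • v‖ ≤ ‖v‖ := by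
      rw [norm_smul, Real.norm_of_nonneg ht.1]
      exact mul_le_of_le_one_left (norm_nonneg v) ht.2
    have hst := hball (x + t • v) (by simpa using htv.trans_lt hv)
    rw [add_sub_cancel_left] at hst
    calc |⟪s (x + t • v), v⟫ - (⟪s x, v⟫ + t * ⟪A v, v⟫)|
        = |⟪s (x + t • v) - s x - A (t • v), v⟫| := by
          rw [inner_sub_left, inner_sub_left, map_smul, real_inner_smul_left, sub_sub]
      _ ≤ ‖s (x + t • v) - s x - A (t • v)‖ * ‖v‖ := abs_real_inner_le_norm _ _
      _ ≤ c * ‖v‖ * ‖v‖ := by gcongr; exact hst.trans (by gcongr)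
      _ = c * ‖v‖ ^ 2 := by ring
  have hseg := abs_sub_le_of_subgradient_near_affine
    (hf.comp (by fun_prop : Continuous fun t : ℝ => x + t • v)) hsub hclose
  simpa [v] using hseg

end Expansion

section Alexandrov

variable {E : Type*} [NormedAddCommGroup E] [InnerProductSpace ℝ E] {f : E → ℝ} {x p : E}
  {A : E →L[ℝ] E}

lemma inner_selfAdjointPart_apply_self [CompleteSpace E] (A : E →L[ℝ] E) (v : E) :
    ⟪(selfAdjointPart ℝ A : E →L[ℝ] E) v, v⟫ = ⟪A v, v⟫ := by
  rw [selfAdjointPart_apply_coe, ContinuousLinearMap.star_eq_adjoint, smul_apply, add_apply,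
    real_inner_smul_left, inner_add_left, ContinuousLinearMap.adjoint_inner_left,
    real_inner_comm (A v), ← two_mul, invOf_mul_cancel_left]

lemma isPositive_selfAdjointPart [CompleteSpace E] (hA : ∀ v, 0 ≤ ⟪A v, v⟫) :
    (selfAdjointPart ℝ A : E →L[ℝ] E).IsPositive :=
  (ContinuousLinearMap.isPositive_iff' _).2
    ⟨(selfAdjointPart ℝ A).2, fun v => (inner_selfAdjointPart_apply_self A v).symm ▸ hA v⟩

lemma HasQuadraticExpansionAt.selfAdjointPart [CompleteSpace E]
    (h : HasQuadraticExpansionAt f x p A) :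
    HasQuadraticExpansionAt f x p (selfAdjointPart ℝ A : E →L[ℝ] E) :=
  h.congr_left fun y => by rw [inner_selfAdjointPart_apply_self]

lemma HasQuadraticExpansionAt.add_mul_norm_sq (h : HasQuadraticExpansionAt f x p A) (m : ℝ) :
    HasQuadraticExpansionAt (fun y => f y + m / 2 * ‖y‖ ^ 2) x (p + m • x) (A + m • 1) := by
  refine h.congr_left fun y => ?_
  have hsq : ‖y‖ ^ 2 = ‖x‖ ^ 2 + 2 * ⟪x, y - x⟫ + ‖y - x‖ ^ 2 := by
    rw [← norm_add_sq_real, add_sub_cancel]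
  simp only [add_apply, smul_apply, one_apply_eq_self, inner_add_left, real_inner_smul_left,
    real_inner_self_eq_norm_sq, hsq]
  ring

theorem ae_hasQuadraticExpansionAt_of_convexOn [FiniteDimensional ℝ E] [MeasurableSpace E]
    [BorelSpace E] (μ : Measure E) [μ.IsAddHaarMeasure] (hf : ConvexOn ℝ univ f) :
    ∀ᵐ x ∂μ, ∃ (p : E) (A : E →L[ℝ] E), HasQuadraticExpansionAt f x p A ∧ A.IsPositive := by
  have hlip : LocallyLipschitz f := hf.locallyLipschitz
  choose s hs using exists_isSubgradientAt hf hlip.continuous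
  have hmono : ∀ x y, 0 ≤ ⟪s x - s y, x - y⟫ := fun x y => (hs x).inner_sub_nonneg (hs y)
  filter_upwards [ae_differentiableAt_of_locallyLipschitz μ hlip,
    ae_differentiableAt_of_monotone μ hmono] with x hfx hsx
  obtain ⟨A, hA⟩ := hsx (continuousAt_subgradient_of_differentiableAt hs hfx)
  have hexp := hasQuadraticExpansionAt_of_hasFDerivAt_subgradient hlip.continuous hs hA
  exact ⟨s x, _, hexp.selfAdjointPart,
    isPositive_selfAdjointPart (inner_fderiv_nonneg_of_monotone hmono hA)⟩

/-- Negative `m` are the case of interest: they encode semiconvexity. -/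
theorem ae_hasQuadraticExpansionAt_of_strongConvexOn [FiniteDimensional ℝ E] [MeasurableSpace E]
    [BorelSpace E] (μ : Measure E) [μ.IsAddHaarMeasure] {m : ℝ} (hf : StrongConvexOn univ m f) :
    ∀ᵐ x ∂μ, ∃ (p : E) (A : E →L[ℝ] E),
      HasQuadraticExpansionAt f x p A ∧ (A - m • 1).IsPositive := by
  filter_upwards [ae_hasQuadraticExpansionAt_of_convexOn μ (strongConvexOn_iff_convex.1 hf)]
    with x ⟨p, A, hexp, hpos⟩
  exact ⟨p + m • x, A + m • 1, by simpa using hexp.add_mul_norm_sq m, by simpa using hpos⟩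

end Alexandrov

section Supremum

variable {ι E : Type*} [NormedAddCommGroup E]

lemma uniformConvexOn_sSup_image [NormedSpace ℝ E] {t : Set ι} {s : Set E} {φ : ℝ → ℝ}
    {g : ι → E → ℝ} (ht : t.Nonempty) (hg : ∀ i ∈ t, UniformConvexOn s φ (g i))
    (hbdd : ∀ x ∈ s, BddAbove ((fun i => g i x) '' t)) :
    UniformConvexOn s φ fun x => sSup ((fun i => g i x) '' t) := by
  obtain ⟨j, hj⟩ := ht
  refine ⟨(hg j hj).1, fun x hx y hy a b ha hb hab => csSup_le ⟨_, mem_image_of_mem _ hj⟩ ?_⟩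
  rintro _ ⟨i, hi, rfl⟩
  have hix : g i x ≤ sSup ((fun i => g i x) '' t) := le_csSup (hbdd x hx) (mem_image_of_mem _ hi)
  have hiy : g i y ≤ sSup ((fun i => g i y) '' t) := le_csSup (hbdd y hy) (mem_image_of_mem _ hi)
  refine ((hg i hi).2 hx hy ha hb hab).trans ?_
  gcongr

lemma strongConvexOn_add_mul_norm_sub_sq [InnerProductSpace ℝ E] (c m : ℝ) (y : E) :
    StrongConvexOn univ m fun x => c + m / 2 * ‖x - y‖ ^ 2 := by
  have haffine : ConvexOn ℝ univ fun x : E => (innerSL ℝ (-m • y)) x + (c + m / 2 * ‖y‖ ^ 2) :=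
    ((innerSL ℝ (-m • y)).toLinearMap.convexOn convex_univ).add_const _
  refine strongConvexOn_iff_convex.2 (haffine.congr fun x _ => ?_)
  simp only [innerSL_apply_apply, real_inner_smul_left, norm_sub_sq_real, real_inner_comm x y]
  ring

end Supremum

/-! ### Sup- and inf-convolutions -/

section Convolution

variable {d : ℕ}

lemma quadForm_eq_inner_toEuclideanCLM (M : Matrix (Fin d) (Fin d) ℝ) (v : Eucl d) :
    quadForm M v = ⟪Matrix.toEuclideanCLM (𝕜 := ℝ) M v, v⟫ := by
  rw [real_inner_comm, Matrix.inner_toEuclideanCLM]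
  simp only [quadForm, dotProduct, Matrix.mulVec, Finset.mul_sum]
  exact Finset.sum_congr rfl fun i _ => Finset.sum_congr rfl fun j _ => by ring

lemma quadForm_neg (M : Matrix (Fin d) (Fin d) ℝ) (v : Eucl d) :
    quadForm (-M) v = -quadForm M v := by
  simp only [quadForm_eq_inner_toEuclideanCLM, map_neg, neg_apply, inner_neg_left]

lemma HasSecondOrderExpansionAt.neg {f : Eucl d → ℝ} {x p : Eucl d}
    {M : Matrix (Fin d) (Fin d) ℝ} (h : HasSecondOrderExpansionAt f x p M) :
    HasSecondOrderExpansionAt (fun y => -f y) x (-p) (-M) := by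
  refine h.neg_left.congr_left fun y => ?_
  rw [quadForm_neg, inner_neg_left]
  ring

lemma posSemidef_iff_isPositive_toEuclideanCLM {M : Matrix (Fin d) (Fin d) ℝ} :
    M.PosSemidef ↔ (Matrix.toEuclideanCLM (𝕜 := ℝ) M).IsPositive := by
  rw [← Matrix.isPositive_toEuclideanLin_iff, ← Matrix.coe_toEuclideanCLM_eq_toEuclideanLin,
    ContinuousLinearMap.isPositive_toLinearMap_iff]

theorem ae_hasSecondOrderExpansionAt_of_strongConvexOn {f : Eucl d → ℝ} {m : ℝ}
    (hf : StrongConvexOn univ m f) :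
    ∀ᵐ x ∂(volume : Measure (Eucl d)), ∃ (p : Eucl d) (M : Matrix (Fin d) (Fin d) ℝ),
      M.IsSymm ∧ HasSecondOrderExpansionAt f x p M ∧ (M - m • 1).PosSemidef := by
  filter_upwards [ae_hasQuadraticExpansionAt_of_strongConvexOn volume hf] with x ⟨p, A, hexp, hpos⟩
  obtain ⟨M, rfl⟩ : ∃ M, Matrix.toEuclideanCLM (𝕜 := ℝ) M = A := EquivLike.surjective _ A
  have hM : (M - m • 1).PosSemidef := by
    rwa [posSemidef_iff_isPositive_toEuclideanCLM, map_sub, map_smul, map_one]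
  have hsymm : M.IsSymm := by
    simpa [Matrix.IsSymm, Matrix.IsHermitian] using hM.isHermitian
  exact ⟨p, M, hsymm, hexp.congr_left fun y => by rw [quadForm_eq_inner_toEuclideanCLM], hM⟩

variable {Ω : Set (Eucl d)} {u : Eucl d → ℝ} {ε : ℝ}

lemma strongConvexOn_supConv (hne : Ω.Nonempty) (hu : BddAbove (u '' closure Ω)) (hε : 0 < ε) :
    StrongConvexOn univ (-(1 / ε)) (supConv Ω u ε) := by
  refine uniformConvexOn_sSup_image hne.closure (fun y _ => ?_) fun x _ => ?_
  · have hform : (fun x => u y - ‖x - y‖ ^ 2 / (2 * ε)) =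
        fun x => u y + -(1 / ε) / 2 * ‖x - y‖ ^ 2 := by
      funext x
      ring
    exact hform ▸ strongConvexOn_add_mul_norm_sub_sq (u y) (-(1 / ε)) y
  · obtain ⟨C, hC⟩ := hu
    refine ⟨C, ?_⟩
    rintro _ ⟨y, hy, rfl⟩
    exact (sub_le_self _ (by positivity)).trans (hC (mem_image_of_mem u hy))

theorem ae_hasSecondOrderExpansionAt_supConv (hne : Ω.Nonempty) (hu : BddAbove (u '' closure Ω))
    (hε : 0 < ε) :
    ∀ᵐ x ∂(volume : Measure (Eucl d)), ∃ (p : Eucl d) (M : Matrix (Fin d) (Fin d) ℝ),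
      M.IsSymm ∧ HasSecondOrderExpansionAt (supConv Ω u ε) x p M ∧
        (M + (1 / ε) • (1 : Matrix (Fin d) (Fin d) ℝ)).PosSemidef := by
  simpa only [neg_smul, sub_neg_eq_add] using
    ae_hasSecondOrderExpansionAt_of_strongConvexOn (strongConvexOn_supConv hne hu hε)

lemma infConv_eq_neg_supConv (Ω : Set (Eucl d)) (u : Eucl d → ℝ) (ε : ℝ) :
    infConv Ω u ε = fun x => -supConv Ω (-u) ε x := by
  funext x
  rw [infConv, supConv, Real.sInf_def, ← image_neg_eq_neg, image_image]
  congr 3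
  funext y
  rw [Pi.neg_apply, neg_add']

theorem ae_hasSecondOrderExpansionAt_infConv (hne : Ω.Nonempty) (hu : BddBelow (u '' closure Ω))
    (hε : 0 < ε) :
    ∀ᵐ x ∂(volume : Measure (Eucl d)), ∃ (p : Eucl d) (M : Matrix (Fin d) (Fin d) ℝ),
      M.IsSymm ∧ HasSecondOrderExpansionAt (infConv Ω u ε) x p M ∧
        ((1 / ε) • (1 : Matrix (Fin d) (Fin d) ℝ) - M).PosSemidef := by
  have hneg : BddAbove ((-u) '' closure Ω) := by
    have himage : (-u) '' closure Ω = -(u '' closure Ω) := by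
      rw [← image_neg_eq_neg, image_image]
      rfl
    exact himage ▸ hu.neg
  rw [infConv_eq_neg_supConv]
  filter_upwards [ae_hasSecondOrderExpansionAt_supConv hne hneg hε] with x ⟨p, M, hM, hexp, hpos⟩
  exact ⟨-p, -M, hM.neg, hexp.neg, by rwa [sub_neg_eq_add, add_comm]⟩

theorem supConv_ae_second_order_expansion_general (hne : Ω.Nonempty)
    (habove : BddAbove (u '' closure Ω)) (hbelow : BddBelow (u '' closure Ω)) (hε : 0 < ε) :
    ∀ᵐ x ∂(volume : Measure (Eucl d)),
      (∃ (p : Eucl d) (M : Matrix (Fin d) (Fin d) ℝ), M.IsSymm ∧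
          HasSecondOrderExpansionAt (supConv Ω u ε) x p M ∧
          (M + (1 / ε) • (1 : Matrix (Fin d) (Fin d) ℝ)).PosSemidef) ∧
      (∃ (p : Eucl d) (M : Matrix (Fin d) (Fin d) ℝ), M.IsSymm ∧
          HasSecondOrderExpansionAt (infConv Ω u ε) x p M ∧
          ((1 / ε) • (1 : Matrix (Fin d) (Fin d) ℝ) - M).PosSemidef) :=
  (ae_hasSecondOrderExpansionAt_supConv hne habove hε).and
    (ae_hasSecondOrderExpansionAt_infConv hne hbelow hε)

end Convolution

/-- **Almost-everywhere second-order expansions of sup- and inf-convolutions.**  For `u`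
continuous on the closure of a bounded open `Ω` and `ε > 0`, for a.e. `x ∈ Ω` the
sup-convolution `u^ε` admits a second-order expansion with a symmetric matrix
`M^ε(x) ≥ -(1/ε)I`, and the inf-convolution `u_ε` admits one with a symmetric matrix
`M_ε(x) ≤ (1/ε)I`. -/
theorem supConv_ae_second_order_expansion (d : ℕ) (Ω : Set (Eucl d))
    (hΩopen : IsOpen Ω) (hΩbdd : Bornology.IsBounded Ω)
    (u : Eucl d → ℝ) (hu : ContinuousOn u (closure Ω)) (ε : ℝ) (hε : 0 < ε) :
    ∀ᵐ x ∂(volume : Measure (Eucl d)), x ∈ Ω →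
      (∃ (p : Eucl d) (M : Matrix (Fin d) (Fin d) ℝ), M.IsSymm ∧
          HasSecondOrderExpansionAt (supConv Ω u ε) x p M ∧
          (M + (1 / ε) • (1 : Matrix (Fin d) (Fin d) ℝ)).PosSemidef) ∧
      (∃ (p : Eucl d) (M : Matrix (Fin d) (Fin d) ℝ), M.IsSymm ∧
          HasSecondOrderExpansionAt (infConv Ω u ε) x p M ∧
          ((1 / ε) • (1 : Matrix (Fin d) (Fin d) ℝ) - M).PosSemidef) := by
  rcases Ω.eq_empty_or_nonempty with rfl | hne
  · simp
  · exact (supConv_ae_second_order_expansion_general hne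
      (hΩbdd.isCompact_closure.bddAbove_image hu) (hΩbdd.isCompact_closure.bddBelow_image hu)
      hε).mono fun _ hx _ => hx

end
end

section
/- Let φ : ℝⁿ → ℝ be semiconvex and let x̂ be a strict local maximum point of φ. For p ∈ ℝⁿ set φ_p(x) := φ(x) + ⟨p, x⟩. Then for every r > 0 and δ > 0, the set K := { x ∈ B_r(x̂) : there exists p with |p| ≤ δ such that φ_p has a local maximum at x } has positive Lebesgue measure. -/
open scoped RealInnerProductSpace
open MeasureTheory Filter Topology Asymptotics Metric Set

noncomputable section

/-- A function `φ : ℝᵈ → ℝ` is semiconvex if `x ↦ φ(x) + c|x|²/2` is convex for some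
`c ≥ 0`. -/
def Semiconvex {d : ℕ} (φ : Eucl d → ℝ) : Prop :=
  ∃ c : ℝ, 0 ≤ c ∧ ConvexOn ℝ univ fun x => φ x + c * ‖x‖ ^ 2 / 2

/-!
For every small slope `p`, compactness keeps a maximum point `x p` of `φ + p` over a fixed closed
ball around the strict maximum point close to its centre. Semiconvexity puts a concave paraboloid
below `φ` at `x p`, while maximality puts an affine function above `φ` near `x p`. Comparing these
bounds for two slopes shows that `p ↦ x p` is antilipschitz: slopes can be read off from maximum
points in a Lipschitz way. An antilipschitz image of a ball of slopes cannot be Lebesgue null.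

Semiconvexity is expressed as `StrongConvexOn` with a negative modulus. The norm need not be
Euclidean, so slopes are taken in the dual space.
-/

section Semiconvex

variable {E : Type*} [NormedAddCommGroup E] [NormedSpace ℝ E] {f : E → ℝ} {s : Set E} {m : ℝ}

lemma strongConvexOn_add_convexOn {g : E → ℝ} (hf : StrongConvexOn s m f) (hg : ConvexOn ℝ s g) :
    StrongConvexOn s m (f + g) := by
  simpa only [StrongConvexOn, add_zero] using!
    UniformConvexOn.add hf (uniformConvexOn_zero.2 hg)

lemma strongConvexOn_comp_continuousLinearMap {F : Type*} [NormedAddCommGroup F] [NormedSpace ℝ F]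
    (hf : StrongConvexOn s m f) (L : F →L[ℝ] E) :
    StrongConvexOn (L ⁻¹' s) (-(|m| * ‖L‖ ^ 2)) (f ∘ L) := by
  refine ⟨hf.1.linear_preimage L.toLinearMap, fun x hx y hy a b ha hb hab => ?_⟩
  have hmodulus : -(|m| * ‖L‖ ^ 2) / 2 * ‖x - y‖ ^ 2 ≤ m / 2 * ‖L x - L y‖ ^ 2 :=
    calc -(|m| * ‖L‖ ^ 2) / 2 * ‖x - y‖ ^ 2 = -|m| / 2 * (‖L‖ * ‖x - y‖) ^ 2 := by ring
      _ ≤ -|m| / 2 * ‖L x - L y‖ ^ 2 := by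
        refine mul_le_mul_of_nonpos_left ?_ (by linarith [abs_nonneg m])
        gcongr
        simpa only [map_sub] using L.le_opNorm (x - y)
      _ ≤ m / 2 * ‖L x - L y‖ ^ 2 := by
        gcongr
        exact neg_abs_le m
  calc (f ∘ L) (a • x + b • y) = f (a • L x + b • L y) := by simp
    _ ≤ a • f (L x) + b • f (L y) - a * b * (m / 2 * ‖L x - L y‖ ^ 2) := hf.2 hx hy ha hb hab
    _ ≤ _ := by
      simp only [Function.comp_apply]
      gcongr

lemma continuousOn_interior_of_strongConvexOn [FiniteDimensional ℝ E]
    (hf : StrongConvexOn s m f) : ContinuousOn f (interior s) := by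
  let e := toEuclidean (E := E)
  have hconv := strongConvexOn_iff_convex.1
    (strongConvexOn_comp_continuousLinearMap hf e.symm.toContinuousLinearMap)
  have hcont : ContinuousOn (f ∘ e.symm) (interior (e.symm ⁻¹' s)) :=
    (hconv.continuousOn_interior.add
      (g := fun x => -(|m| * ‖e.symm.toContinuousLinearMap‖ ^ 2) / 2 * ‖x‖ ^ 2)
      (by fun_prop)).congr fun x _ => by simp
  have hmaps : MapsTo e (interior s) (interior (e.symm ⁻¹' s)) := fun x hx =>
    preimage_interior_subset_interior_preimage e.symm.continuous (by simpa using hx)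
  exact (hcont.comp e.continuous.continuousOn hmaps).congr fun x _ => by simp

lemma add_sq_le_of_isLocalMax {x y : E} (hf : StrongConvexOn s m f) (hs : s ∈ 𝓝 x)
    (hx : IsLocalMax f x) (hy : y ∈ s) : f x + m / 2 * ‖y - x‖ ^ 2 ≤ f y := by
  have hreflect : Tendsto (fun t : ℝ => x - t • (y - x)) (𝓝[>] 0) (𝓝 x) :=
    tendsto_nhdsWithin_of_tendsto_nhds (Continuous.tendsto' (by fun_prop) _ _ (by simp))
  have hlim : Tendsto (fun t : ℝ => f x + (1 + t) * (m / 2 * ‖y - x‖ ^ 2)) (𝓝[>] 0)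
      (𝓝 (f x + m / 2 * ‖y - x‖ ^ 2)) :=
    tendsto_nhdsWithin_of_tendsto_nhds (Continuous.tendsto' (by fun_prop) _ _ (by simp))
  refine le_of_tendsto hlim ?_
  filter_upwards [hreflect.eventually hx, hreflect hs, self_mem_nhdsWithin] with t hmax hmem ht
  have ht : 0 < t := ht
  -- `x` lies between `y` and its small reflection `x - t • (y - x)`, where `f` is at most `f x`.
  have hcomb : (1 / (1 + t)) • (x - t • (y - x)) + (t / (1 + t)) • y = x := by
    match_scalars <;> field_simp <;> ring
  have hnorm : ‖x - t • (y - x) - y‖ = (1 + t) * ‖y - x‖ := by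
    rw [show x - t • (y - x) - y = -((1 + t) • (y - x)) by module, norm_neg, norm_smul,
      Real.norm_of_nonneg (by positivity)]
  have hconv := hf.2 hmem hy (show 0 ≤ 1 / (1 + t) by positivity)
    (show 0 ≤ t / (1 + t) by positivity) (by field_simp)
  rw [hcomb, hnorm, smul_eq_mul, smul_eq_mul] at hconv
  have hscaled : t * (f x + (1 + t) * (m / 2 * ‖y - x‖ ^ 2)) ≤ t * f y := by
    field_simp at hconv
    linarith
  exact le_of_mul_le_mul_left hscaled ht

variable {p₁ p₂ : StrongDual ℝ E} {x₁ x₂ : E} {ρ : ℝ}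

lemma sub_apply_le_of_isMaxOn (hf : StrongConvexOn s m f)
    (hs₁ : ball x₁ ρ ⊆ s) (hs₂ : ball x₂ ρ ⊆ s)
    (h₁ : IsMaxOn (fun y => f y + p₁ y) (ball x₁ ρ) x₁)
    (h₂ : IsMaxOn (fun y => f y + p₂ y) (ball x₂ ρ) x₂)
    (hx : ‖x₂ - x₁‖ < ρ) {w : E} (hw : ‖w‖ < ρ) :
    (p₂ - p₁) w ≤ |m| / 2 * (‖x₂ - x₁‖ + ‖w‖) ^ 2 := by
  have hnhds : ball x₁ ρ ∈ 𝓝 x₁ := ball_mem_nhds x₁ ((norm_nonneg _).trans_lt hx)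
  have hw₂ : x₂ + w ∈ ball x₂ ρ := by simpa [mem_ball_iff_norm] using hw
  have hparaboloid : f x₁ + p₁ x₁ + m / 2 * ‖x₂ + w - x₁‖ ^ 2 ≤ f (x₂ + w) + p₁ (x₂ + w) :=
    add_sq_le_of_isLocalMax (strongConvexOn_add_convexOn hf (p₁.toLinearMap.convexOn hf.1))
      (mem_of_superset hnhds hs₁) (h₁.isLocalMax hnhds) (hs₂ hw₂)
  have hmax₁ : f x₂ + p₁ x₂ ≤ f x₁ + p₁ x₁ := h₁ (mem_ball_iff_norm.2 hx)
  have hmax₂ : f (x₂ + w) + p₂ (x₂ + w) ≤ f x₂ + p₂ x₂ := h₂ hw₂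
  calc (p₂ - p₁) w ≤ -m / 2 * ‖x₂ + w - x₁‖ ^ 2 := by
        simp only [map_add, sub_apply] at hparaboloid hmax₂ ⊢
        linarith
    _ ≤ |m| / 2 * (‖x₂ - x₁‖ + ‖w‖) ^ 2 := by
        gcongr
        · exact neg_le_abs m
        · simpa only [add_sub_right_comm] using norm_add_le (x₂ - x₁) w

lemma norm_sub_le_of_isMaxOn (hf : StrongConvexOn s m f)
    (hs₁ : ball x₁ ρ ⊆ s) (hs₂ : ball x₂ ρ ⊆ s)
    (h₁ : IsMaxOn (fun y => f y + p₁ y) (ball x₁ ρ) x₁)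
    (h₂ : IsMaxOn (fun y => f y + p₂ y) (ball x₂ ρ) x₂) (hx : ‖x₂ - x₁‖ < ρ) :
    ‖p₂ - p₁‖ ≤ 2 * |m| * ‖x₂ - x₁‖ := by
  have hlim : Tendsto (fun t : ℝ => 2 * |m| * t) (𝓝[>] ‖x₂ - x₁‖) (𝓝 (2 * |m| * ‖x₂ - x₁‖)) :=
    tendsto_nhdsWithin_of_tendsto_nhds (Continuous.tendsto (by fun_prop) _)
  refine ge_of_tendsto hlim ?_
  -- Test vectors of length `‖x₂ - x₁‖` would be optimal, but this length may be `0`.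
  filter_upwards [Ioo_mem_nhdsGT hx] with t ht
  have ht₀ : 0 < t := (norm_nonneg _).trans_lt ht.1
  have hbound (u : E) (hu : ‖u‖ = 1) : (p₂ - p₁) u ≤ 2 * |m| * t := by
    have hnorm : ‖t • u‖ = t := by rw [norm_smul, hu, mul_one, Real.norm_of_nonneg ht₀.le]
    have htest := sub_apply_le_of_isMaxOn hf hs₁ hs₂ h₁ h₂ hx (hnorm.trans_lt ht.2)
    rw [hnorm, map_smul, smul_eq_mul] at htest
    refine le_of_mul_le_mul_left ?_ ht₀
    calc t * (p₂ - p₁) u ≤ |m| / 2 * (‖x₂ - x₁‖ + t) ^ 2 := htest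
      _ ≤ |m| / 2 * (t + t) ^ 2 := by
        gcongr
        exact ht.1.le
      _ = t * (2 * |m| * t) := by ring
  refine ContinuousLinearMap.opNorm_le_of_unit_norm (by positivity) fun u hu => ?_
  refine abs_le'.2 ⟨hbound u hu, ?_⟩
  simpa only [map_neg] using hbound (-u) (by rwa [norm_neg])

lemma antilipschitzWith_of_isMaxOn {z : E} {T : Set (StrongDual ℝ E)} {x : T → E}
    (hf : StrongConvexOn s m f) (hs : ball z ρ ⊆ s) (hx : ∀ p, x p ∈ ball z (ρ / 3))
    (hmax : ∀ p : T, IsMaxOn (fun y => f y + p.1 y) (ball z ρ) (x p)) :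
    AntilipschitzWith (2 * ‖m‖₊) x := by
  have hsub (p : T) : ball (x p) (2 * ρ / 3) ⊆ ball z ρ :=
    ball_subset_ball' (by linarith [mem_ball.1 (hx p)])
  refine AntilipschitzWith.of_le_mul_dist fun p q => ?_
  have hdist : ‖x p - x q‖ < 2 * ρ / 3 := by
    rw [← dist_eq_norm]
    linarith [dist_triangle_right (x p) (x q) z, mem_ball.1 (hx p), mem_ball.1 (hx q)]
  rw [Subtype.dist_eq, dist_eq_norm, dist_eq_norm]
  exact norm_sub_le_of_isMaxOn hf ((hsub q).trans hs) ((hsub p).trans hs)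
    ((hmax q).on_subset (hsub q)) ((hmax p).on_subset (hsub p)) hdist

end Semiconvex

lemma eventually_exists_isMaxOn_add {E : Type*} [NormedAddCommGroup E] [NormedSpace ℝ E]
    {f : E → ℝ} {K U : Set E} {z : E} (hK : IsCompact K) (hf : ContinuousOn f K) (hzK : z ∈ K)
    (hz : ∀ y ∈ K, y ≠ z → f y < f z) (hU : U ∈ 𝓝 z) :
    ∀ᶠ p : StrongDual ℝ E in 𝓝 0, ∃ x ∈ U, IsMaxOn (fun y => f y + p y) K x := by
  obtain ⟨a, ha, hgap⟩ : ∃ a < f z, ∀ y ∈ K \ interior U, f y ≤ a :=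
    (hK.diff isOpen_interior).exists_forall_le' (α := ℝᵒᵈ) (hf.mono sdiff_subset) fun y hy =>
      hz y hy.1 fun h => hy.2 (h ▸ mem_interior_iff_mem_nhds.2 hU)
  have hsmall : ∀ᶠ p : StrongDual ℝ E in 𝓝 0, ∀ y ∈ K, p (y - z) < f z - a := by
    refine hK.eventually_forall_of_forall_eventually fun y _ => ?_
    have hcont : Continuous fun q : StrongDual ℝ E × E => q.1 (q.2 - z) := by fun_prop
    exact hcont.continuousAt.eventually_lt_const (by simpa using ha)
  filter_upwards [hsmall] with p hp
  obtain ⟨x, hxK, hmax⟩ := hK.exists_isMaxOn ⟨z, hzK⟩ (hf.add p.continuous.continuousOn)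
  refine ⟨x, ?_, hmax⟩
  by_contra hxU
  have hfar := hgap x ⟨hxK, fun h => hxU (interior_subset h)⟩
  have hxz : f z + p z ≤ f x + p x := hmax hzK
  have hpx := hp x hxK
  rw [map_sub] at hpx
  linarith

lemma finrank_strongDual {𝕜 E : Type*} [NontriviallyNormedField 𝕜] [CompleteSpace 𝕜]
    [NormedAddCommGroup E] [NormedSpace 𝕜 E] [FiniteDimensional 𝕜 E] :
    Module.finrank 𝕜 (StrongDual 𝕜 E) = Module.finrank 𝕜 E :=
  (LinearMap.toContinuousLinearMap (𝕜 := 𝕜) (E := E) (F' := 𝕜)).finrank_eq.symm.trans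
    Subspace.dual_finrank_eq

section Measure

variable {E : Type*} [NormedAddCommGroup E] [NormedSpace ℝ E] [FiniteDimensional ℝ E]
  [MeasurableSpace E] [BorelSpace E] (μ : Measure E) [μ.IsAddHaarMeasure]

lemma measure_range_pos_of_antilipschitzWith {X : Type*} [EMetricSpace X] [MeasurableSpace X]
    [BorelSpace X] {t : Set X} {L : NNReal} {g : t → E} (hg : AntilipschitzWith L g)
    (ht : 0 < μH[Module.finrank ℝ E] t) : 0 < μ (range g) := by
  refine pos_iff_ne_zero.2 fun hnull => ht.not_ge ?_
  have hrange : μH[Module.finrank ℝ E] (range g) = 0 :=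
    Measure.absolutelyContinuous_isAddHaarMeasure _ μ hnull
  calc μH[Module.finrank ℝ E] t = μH[Module.finrank ℝ E] (univ : Set t) := by
        simpa using (isometry_subtype_coe (s := t)).hausdorffMeasure_image
          (Or.inl (Nat.cast_nonneg _)) univ
    _ ≤ L ^ (Module.finrank ℝ E : ℝ) * μH[Module.finrank ℝ E] (g '' univ) :=
        hg.le_hausdorffMeasure_image (Nat.cast_nonneg _) univ
    _ = 0 := by rw [image_univ, hrange, mul_zero]

theorem jensens_lemma_general {φ : E → ℝ} {s : Set E} {m : ℝ} {z : E}
    (hφ : StrongConvexOn s m φ) (hs : s ∈ 𝓝 z) (hz : ∀ᶠ y in 𝓝[≠] z, φ y < φ z)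
    {r δ : ℝ} (hr : 0 < r) (hδ : 0 < δ) :
    0 < μ {x ∈ ball z r | ∃ p : StrongDual ℝ E, ‖p‖ ≤ δ ∧ IsLocalMax (fun y => φ y + p y) x} := by
  obtain ⟨ρ, hρ, hball⟩ := nhds_basis_closedBall.mem_iff.1 (inter_mem (interior_mem_nhds.2 hs)
    (inter_mem (eventually_nhdsWithin_iff.1 hz) (ball_mem_nhds z hr)))
  have hcont : ContinuousOn φ (closedBall z ρ) :=
    (continuousOn_interior_of_strongConvexOn hφ).mono fun y hy => (hball hy).1
  let T : Set (StrongDual ℝ E) :=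
    {p | ‖p‖ ≤ δ ∧ ∃ x ∈ ball z (ρ / 3), IsMaxOn (fun y => φ y + p y) (closedBall z ρ) x}
  have hT : T ∈ 𝓝 0 := by
    filter_upwards [closedBall_mem_nhds 0 hδ, eventually_exists_isMaxOn_add
      (isCompact_closedBall z ρ) hcont (mem_closedBall_self hρ.le) (fun y hy => (hball hy).2.1)
      (ball_mem_nhds z (by positivity : 0 < ρ / 3))] with p hp hmax
    exact ⟨mem_closedBall_zero_iff.1 hp, hmax⟩
  choose x hx hmax using fun p : T => p.2.2
  have hanti : AntilipschitzWith (2 * ‖m‖₊) x := antilipschitzWith_of_isMaxOn hφ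
    (fun y hy => interior_subset (hball (ball_subset_closedBall hy)).1) hx
    fun p => (hmax p).on_subset ball_subset_closedBall
  have hpos : 0 < μ (range x) := measure_range_pos_of_antilipschitzWith μ hanti <| by
    rw [← finrank_strongDual (𝕜 := ℝ)]
    exact Measure.measure_pos_of_mem_nhds _ hT
  refine hpos.trans_le (measure_mono ?_)
  rintro _ ⟨p, rfl⟩
  have hxρ : closedBall z ρ ∈ 𝓝 (x p) :=
    closedBall_mem_nhds_of_mem (ball_subset_ball (by linarith) (hx p))
  exact ⟨(hball (mem_of_mem_nhds hxρ)).2.2, p, p.2.1, (hmax p).isLocalMax hxρ⟩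

end Measure

lemma Semiconvex.exists_strongConvexOn {d : ℕ} {φ : Eucl d → ℝ} (hφ : Semiconvex φ) :
    ∃ m : ℝ, StrongConvexOn univ m φ := by
  obtain ⟨c, -, hc⟩ := hφ
  refine ⟨-c, strongConvexOn_iff_convex.2 (hc.congr fun x _ => ?_)⟩
  ring

/-- **Jensen's Lemma.**  If `φ : ℝᵈ → ℝ` is semiconvex and has a strict local maximum at
`x̂`, then for every `r, δ > 0` the set of points `x ∈ B_r(x̂)` at which some perturbation
`φ_p = φ + ⟨p, ·⟩` with `|p| ≤ δ` attains a local maximum has positive Lebesgue measure. -/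
theorem jensens_lemma (d : ℕ) (φ : Eucl d → ℝ) (hφ : Semiconvex φ) (xhat : Eucl d)
    (hstrict : ∃ U ∈ nhds xhat, ∀ y ∈ U, y ≠ xhat → φ y < φ xhat)
    (r δ : ℝ) (hr : 0 < r) (hδ : 0 < δ) :
    0 < volume {x ∈ Metric.ball xhat r |
      ∃ p : Eucl d, ‖p‖ ≤ δ ∧ IsLocalMax (fun y => φ y + ⟪p, y⟫) x} := by
  obtain ⟨m, hm⟩ := hφ.exists_strongConvexOn
  simpa [(InnerProductSpace.toDual ℝ (Eucl d)).surjective.exists] using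
    jensens_lemma_general volume hm univ_mem
      (eventually_nhdsWithin_iff.2 (eventually_iff_exists_mem.2 hstrict)) hr hδ

end
end

section
/- Let B₁ ⊂ ℝⁿ be the open unit ball, let F : S(n) × ℝⁿ × ℝ × B̄₁ → ℝ and f : B̄₁ → ℝ be continuous, with F degenerate elliptic (i.e. F(M+N,P,r,x) ≤ F(M,P,r,x) whenever N is positive semidefinite), and let u be a bounded continuous viscosity subsolution of F(D²u, Du, u, x) = f(x) in B₁. Fix ε > 0 and let u^ε be the sup-convolution of u (taken over B̄₁). Then for almost every x ∈ B_{1 - 2(ε‖u‖_∞)^{1/2}} the following holds: if u^ε admits at x a second-order expansion u^ε(y) = u^ε(x) + ⟨p, y-x⟩ + (1/2)⟨M^ε(x)(y-x), y-x⟩ + o(|y-x|²), and if x^ε ∈ B̄₁ is any point satisfying u^ε(x) = u(x^ε) - |x^ε - x|²/(2ε), then F(M^ε(x), p, u(x^ε), x^ε) ≤ f(x^ε). -/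
/-!
Sup-convolution transports second-order superjets: if `a` attains the supremum defining `u^ε(x)`,
the competitor `z` in the supremum defining `u^ε(z - a + x)` pays the same penalty as `a` does at
`x`, so `u(z) - u(a) ≤ u^ε(z - a + x) - u^ε(x)` and every superjet `(p, M)` of `u^ε` at `x` is a
superjet of `u` at `a`. Comparing `a` with the competitor `x` gives `‖a - x‖ ≤ 2 (ε‖u‖_∞)^{1/2}`,
so `a` is interior, and there the subsolution inequality holds for superjets: test with the
quadratic polynomial of Hessian `M + δI` and let `δ → 0`. A second-order expansion is in particular
a superjet, so the conclusion holds at every point and not only almost everywhere.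
-/

open scoped RealInnerProductSpace
open MeasureTheory Filter Topology Asymptotics Metric Set

noncomputable section

section SecondDerivatives

variable {d : ℕ}

theorem gradAt_eq_of_hasGradientAt {φ : Eucl d → ℝ} {g x : Eucl d} (h : HasGradientAt φ g x) :
    gradAt φ x = g := by
  ext i
  simp [gradAt, h.hasFDerivAt.fderiv, EuclideanSpace.inner_single_right]

theorem hessAt_eq_of_hasGradientAt {φ : Eucl d → ℝ} {g : Eucl d → Eucl d} {x : Eucl d}
    {A : Eucl d →L[ℝ] Eucl d} (hφ : ∀ᶠ y in 𝓝 x, HasGradientAt φ (g y) y)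
    (hg : HasFDerivAt g A x) :
    hessAt φ x = Matrix.of fun i j => A (EuclideanSpace.single i 1) j := by
  ext i j
  have hpartial : (fun y => fderiv ℝ φ y (EuclideanSpace.single j 1)) =ᶠ[𝓝 x] fun y => g y j :=
    hφ.mono fun y hy => by
      simp [hy.hasFDerivAt.fderiv, EuclideanSpace.inner_single_right]
  have hcoord : HasFDerivAt (fun y => g y j) ((EuclideanSpace.proj j).comp A) x :=
    (EuclideanSpace.proj (𝕜 := ℝ) j).hasFDerivAt.comp x hg
  simp [hessAt, hpartial.fderiv_eq, hcoord.fderiv]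

end SecondDerivatives

section QuadraticPolynomials

open Matrix (toEuclideanCLM)

variable {d : ℕ}

theorem quadForm_eq_inner (M : Matrix (Fin d) (Fin d) ℝ) (v : Eucl d) :
    quadForm M v = ⟪v, toEuclideanCLM (𝕜 := ℝ) M v⟫ := by
  rw [Matrix.inner_toEuclideanCLM]
  simp only [quadForm, dotProduct, Matrix.mulVec, Finset.mul_sum]
  exact Finset.sum_congr rfl fun i _ => Finset.sum_congr rfl fun j _ => by ring

/-- The quadratic polynomial `z ↦ ⟨p, z - a⟩ + ½⟨M(z - a), z - a⟩`: the increment from `a` of a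
second-order Taylor polynomial with gradient `p` and Hessian `M`. -/
def quadPoly (a p : Eucl d) (M : Matrix (Fin d) (Fin d) ℝ) (z : Eucl d) : ℝ :=
  ⟪p, z - a⟫ + (1 / 2) * quadForm M (z - a)

theorem quadPoly_self (a p : Eucl d) (M : Matrix (Fin d) (Fin d) ℝ) : quadPoly a p M a = 0 := by
  simp [quadPoly, quadForm]

theorem quadPoly_add_smul_one (a p : Eucl d) (M : Matrix (Fin d) (Fin d) ℝ) (δ : ℝ)
    (z : Eucl d) : quadPoly a p (M + δ • 1) z = quadPoly a p M z + δ / 2 * ‖z - a‖ ^ 2 := by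
  simp only [quadPoly, quadForm_eq_inner, map_add, map_smul, map_one, add_apply, smul_apply,
    one_apply_eq_self, inner_add_right, real_inner_smul_right, real_inner_self_eq_norm_sq]
  ring

theorem contDiff_quadPoly (a p : Eucl d) (M : Matrix (Fin d) (Fin d) ℝ) {n : WithTop ℕ∞} :
    ContDiff ℝ n (quadPoly a p M) := by
  unfold quadPoly quadForm
  exact (contDiff_const.inner ℝ (contDiff_id.sub contDiff_const)).add (by fun_prop)

theorem hasGradientAt_quadPoly (a p : Eucl d) {M : Matrix (Fin d) (Fin d) ℝ} (hM : M.IsSymm)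
    (y : Eucl d) :
    HasGradientAt (quadPoly a p M) (p + toEuclideanCLM (𝕜 := ℝ) M (y - a)) y := by
  set A : Eucl d →L[ℝ] Eucl d := toEuclideanCLM (𝕜 := ℝ) M
  have hA : ∀ v w, ⟪A v, w⟫ = ⟪v, A w⟫ :=
    Matrix.isSymmetric_toEuclideanLin_iff.2 <|
      (Matrix.conjTranspose_eq_transpose_of_trivial M).trans hM
  have hsub : HasFDerivAt (fun z => z - a) (ContinuousLinearMap.id ℝ (Eucl d)) y :=
    (hasFDerivAt_id y).sub_const a
  have hpoly := ((hasFDerivAt_const p y).inner ℝ hsub).add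
    ((hsub.inner ℝ (A.hasFDerivAt.comp y hsub)).const_mul (1 / 2))
  have hφ : quadPoly a p M = fun z => ⟪p, z - a⟫ + 1 / 2 * ⟪z - a, A (z - a)⟫ :=
    funext fun z => by rw [quadPoly, quadForm_eq_inner]
  rw [hasGradientAt_iff_hasFDerivAt, hφ]
  refine hpoly.congr_fderiv (ContinuousLinearMap.ext fun v => ?_)
  have hvalue : ⟪y - a, A v⟫ + ⟪v, A (y - a)⟫ = 2 * ⟪A (y - a), v⟫ := by
    rw [← hA, real_inner_comm, two_mul]
  calc ⟪p, v⟫ + ⟪0, y - a⟫ + 1 / 2 * (⟪y - a, A v⟫ + ⟪v, A (y - a)⟫)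
    _ = ⟪p + A (y - a), v⟫ := by rw [hvalue, inner_zero_left, inner_add_left]; ring

theorem gradAt_quadPoly (a p : Eucl d) {M : Matrix (Fin d) (Fin d) ℝ} (hM : M.IsSymm) :
    gradAt (quadPoly a p M) a = p := by
  simpa using gradAt_eq_of_hasGradientAt (hasGradientAt_quadPoly a p hM a)

theorem hessAt_quadPoly (a p : Eucl d) {M : Matrix (Fin d) (Fin d) ℝ} (hM : M.IsSymm) :
    hessAt (quadPoly a p M) a = M := by
  have hgrad : HasFDerivAt (fun y => p + toEuclideanCLM (𝕜 := ℝ) M (y - a))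
      (toEuclideanCLM (𝕜 := ℝ) M) a :=
    ((toEuclideanCLM (𝕜 := ℝ) M).hasFDerivAt.comp a ((hasFDerivAt_id a).sub_const a)).const_add p
  rw [hessAt_eq_of_hasGradientAt (.of_forall (hasGradientAt_quadPoly a p hM)) hgrad]
  ext i j
  simp [hM.apply i j]

end QuadraticPolynomials

section Superjets

variable {d : ℕ} {u : Eucl d → ℝ} {a p : Eucl d} {M : Matrix (Fin d) (Fin d) ℝ}

/-- `(p, M)` belongs to the second-order superjet `J^{2,+}u(a)`: as `z → a`,
`u(z) ≤ u(a) + ⟨p, z - a⟩ + ½⟨M(z - a), z - a⟩ + o(|z - a|²)`. The matrix `M` is not required to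
be symmetric. -/
def HasSuperjetAt (u : Eucl d → ℝ) (a p : Eucl d) (M : Matrix (Fin d) (Fin d) ℝ) : Prop :=
  ∀ δ > 0, ∀ᶠ z in 𝓝 a, u z ≤ u a + quadPoly a p M z + δ * ‖z - a‖ ^ 2

theorem HasSecondOrderExpansionAt.hasSuperjetAt (h : HasSecondOrderExpansionAt u a p M) :
    HasSuperjetAt u a p M := fun δ hδ => by
  filter_upwards [h.bound hδ] with z hz
  rw [Real.norm_eq_abs, norm_pow, norm_norm] at hz
  unfold quadPoly
  linarith [le_of_abs_le hz]

theorem HasSuperjetAt.isLocalMax_sub_quadPoly (h : HasSuperjetAt u a p M) {δ : ℝ} (hδ : 0 < δ) :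
    IsLocalMax (fun z => u z - quadPoly a p (M + δ • 1) z) a := by
  filter_upwards [h (δ / 2) (half_pos hδ)] with z hz
  rw [quadPoly_self, quadPoly_add_smul_one]
  linarith

theorem ViscSubsol.le_of_hasSuperjetAt {Ω : Set (Eucl d)}
    {G : Matrix (Fin d) (Fin d) ℝ → Eucl d → ℝ → Eucl d → ℝ} {g : Eucl d → ℝ}
    (hu : ViscSubsol Ω G g u) (ha : a ∈ Ω) (hG : ContinuousAt (fun N => G N p (u a) a) M)
    (hM : M.IsSymm) (h : HasSuperjetAt u a p M) : G M p (u a) a ≤ g a := by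
  have hperturbed : ∀ δ : ℝ, 0 < δ → G (M + δ • 1) p (u a) a ≤ g a := fun δ hδ => by
    have hsymm : (M + δ • (1 : Matrix (Fin d) (Fin d) ℝ)).IsSymm :=
      hM.add (Matrix.isSymm_one.smul δ)
    simpa only [hessAt_quadPoly a p hsymm, gradAt_quadPoly a p hsymm] using
      hu a ha _ (contDiff_quadPoly a p _).contDiffAt (h.isLocalMax_sub_quadPoly hδ)
  have hM_lim : Tendsto (fun δ : ℝ => M + δ • (1 : Matrix (Fin d) (Fin d) ℝ)) (𝓝[>] 0) (𝓝 M) :=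
    tendsto_nhdsWithin_of_tendsto_nhds <| Continuous.tendsto' (by fun_prop) _ _ (by simp)
  exact le_of_tendsto (hG.tendsto.comp hM_lim) (eventually_mem_nhdsWithin.mono hperturbed)

end Superjets

section SupConvolution

variable {d : ℕ} {Ω : Set (Eucl d)} {u : Eucl d → ℝ} {C ε : ℝ} {x a : Eucl d}

theorem le_supConv (hu : ∀ y ∈ closure Ω, u y ≤ C) (hε : 0 < ε) (x : Eucl d) {z : Eucl d}
    (hz : z ∈ closure Ω) : u z - ‖x - z‖ ^ 2 / (2 * ε) ≤ supConv Ω u ε x := by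
  refine le_csSup ⟨C, forall_mem_image.2 fun y hy => ?_⟩ (mem_image_of_mem _ hz)
  have hpenalty : 0 ≤ ‖x - y‖ ^ 2 / (2 * ε) := by positivity
  linarith [hu y hy]

theorem norm_sub_le_of_supConv_eq (hu : ∀ y ∈ closure Ω, |u y| ≤ C) (hε : 0 < ε)
    (hx : x ∈ closure Ω) (ha : a ∈ closure Ω)
    (hmax : supConv Ω u ε x = u a - ‖a - x‖ ^ 2 / (2 * ε)) :
    ‖a - x‖ ≤ 2 * √(ε * supNorm Ω u) := by
  have habs : ∀ y ∈ closure Ω, |u y| ≤ supNorm Ω u := fun y hy =>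
    le_csSup ⟨C, forall_mem_image.2 hu⟩ (mem_image_of_mem _ hy)
  have hcompare : u x ≤ u a - ‖a - x‖ ^ 2 / (2 * ε) := by
    simpa [hmax] using le_supConv (fun y hy => le_of_abs_le (hu y hy)) hε x hx
  have hpenalty : ‖a - x‖ ^ 2 / (2 * ε) ≤ 2 * supNorm Ω u := by
    linarith [le_of_abs_le (habs a ha), neg_le_of_abs_le (habs x hx)]
  rw [div_le_iff₀ (by positivity)] at hpenalty
  calc ‖a - x‖ ≤ √(2 ^ 2 * (ε * supNorm Ω u)) := Real.le_sqrt_of_sq_le (by linarith)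
    _ = 2 * √(ε * supNorm Ω u) := by
      rw [Real.sqrt_mul (by positivity), Real.sqrt_sq zero_le_two]

theorem HasSuperjetAt.of_supConv {p : Eucl d} {M : Matrix (Fin d) (Fin d) ℝ}
    (h : HasSuperjetAt (supConv Ω u ε) x p M) (hu : ∀ y ∈ closure Ω, u y ≤ C) (hε : 0 < ε)
    (ha : closure Ω ∈ 𝓝 a) (hmax : supConv Ω u ε x = u a - ‖a - x‖ ^ 2 / (2 * ε)) :
    HasSuperjetAt u a p M := fun δ hδ => by
  have htranslate : Tendsto (fun z => z - a + x) (𝓝 a) (𝓝 x) :=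
    Continuous.tendsto' (by fun_prop) _ _ (by simp)
  filter_upwards [htranslate.eventually (h δ hδ), ha] with z hjet hz
  have hcompetitor : u z - ‖a - x‖ ^ 2 / (2 * ε) ≤ supConv Ω u ε (z - a + x) := by
    have := le_supConv hu hε (z - a + x) hz
    rwa [show z - a + x - z = x - a by abel, norm_sub_rev x a] at this
  have hpoly : quadPoly x p M (z - a + x) = quadPoly a p M z := by simp [quadPoly]
  rw [hmax, hpoly, add_sub_cancel_right] at hjet
  linarith

end SupConvolution

theorem supConv_is_subsolution_general {d : ℕ} {Ω : Set (Eucl d)} (hΩ : IsOpen Ω)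
    {F : Matrix (Fin d) (Fin d) ℝ → Eucl d → ℝ → Eucl d → ℝ}
    (hF : ∀ P r, ∀ y ∈ Ω, Continuous fun N => F N P r y)
    {u f : Eucl d → ℝ} {C : ℝ} (hu : ∀ y ∈ closure Ω, |u y| ≤ C)
    (husub : ViscSubsol Ω F f u) {ε : ℝ} (hε : 0 < ε)
    {x : Eucl d} (hx : closedBall x (2 * √(ε * supNorm Ω u)) ⊆ Ω)
    {p : Eucl d} {M : Matrix (Fin d) (Fin d) ℝ} (hM : M.IsSymm)
    (hjet : HasSuperjetAt (supConv Ω u ε) x p M) {a : Eucl d} (ha : a ∈ closure Ω)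
    (hmax : supConv Ω u ε x = u a - ‖a - x‖ ^ 2 / (2 * ε)) :
    F M p (u a) a ≤ f a := by
  have hxΩ : x ∈ closure Ω := subset_closure (hx (mem_closedBall_self (by positivity)))
  have haΩ : a ∈ Ω :=
    hx (mem_closedBall_iff_norm.2 (norm_sub_le_of_supConv_eq hu hε hxΩ ha hmax))
  have hjet_u : HasSuperjetAt u a p M :=
    hjet.of_supConv (fun y hy => le_of_abs_le (hu y hy)) hε
      (mem_of_superset (hΩ.mem_nhds haΩ) subset_closure) hmax
  exact husub.le_of_hasSuperjetAt haΩ (hF p (u a) a haΩ).continuousAt hM hjet_u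

/-- **Sup-convolutions are subsolutions.**  Let `u` be a bounded continuous viscosity
subsolution of `F(D²u, Du, u, x) = f(x)` in `B₁`, with `F`, `f` continuous and `F`
degenerate elliptic.  Then for a.e. `x ∈ B_{1 - 2(ε‖u‖_∞)^{1/2}}`: whenever the
sup-convolution `u^ε` admits a second-order expansion at `x` with data `(p, Mεx)` and
`x^ε ∈ B̄₁` satisfies `u^ε(x) = u(x^ε) - |x^ε - x|²/(2ε)`, one has
`F(Mεx, p, u(x^ε), x^ε) ≤ f(x^ε)`. -/
theorem supConv_is_subsolution (d : ℕ)
    (F : Matrix (Fin d) (Fin d) ℝ → Eucl d → ℝ → Eucl d → ℝ)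
    (f : Eucl d → ℝ)
    (hFcont : ContinuousOn
      (fun q : Matrix (Fin d) (Fin d) ℝ × Eucl d × ℝ × Eucl d =>
        F q.1 q.2.1 q.2.2.1 q.2.2.2)
      (univ ×ˢ univ ×ˢ univ ×ˢ closure (Metric.ball (0 : Eucl d) 1)))
    (hfcont : ContinuousOn f (closure (Metric.ball (0 : Eucl d) 1)))
    (hdegell : ∀ (M N : Matrix (Fin d) (Fin d) ℝ), N.PosSemidef →
      ∀ (P : Eucl d) (r : ℝ) (x : Eucl d), F (M + N) P r x ≤ F M P r x)
    (u : Eucl d → ℝ)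
    (hucont : ContinuousOn u (closure (Metric.ball (0 : Eucl d) 1)))
    (hubdd : ∃ C : ℝ, ∀ y ∈ closure (Metric.ball (0 : Eucl d) 1), |u y| ≤ C)
    (husub : ViscSubsol (Metric.ball (0 : Eucl d) 1) F f u)
    (ε : ℝ) (hε : 0 < ε) :
    ∀ᵐ x ∂(volume : Measure (Eucl d)),
      x ∈ Metric.ball (0 : Eucl d)
            (1 - 2 * Real.sqrt (ε * supNorm (Metric.ball (0 : Eucl d) 1) u)) →
      ∀ (p : Eucl d) (Mεx : Matrix (Fin d) (Fin d) ℝ), Mεx.IsSymm →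
        HasSecondOrderExpansionAt (supConv (Metric.ball (0 : Eucl d) 1) u ε) x p Mεx →
        ∀ xε ∈ closure (Metric.ball (0 : Eucl d) 1),
          supConv (Metric.ball (0 : Eucl d) 1) u ε x = u xε - ‖xε - x‖ ^ 2 / (2 * ε) →
          F Mεx p (u xε) xε ≤ f xε := by
  refine Eventually.of_forall fun x hx p M hM hexp a ha hmax => ?_
  have hF : ∀ P r, ∀ y ∈ ball (0 : Eucl d) 1, Continuous fun N => F N P r y := fun P r y hy =>
    hFcont.comp_continuous (f := fun N => (N, P, r, y)) (by fun_prop)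
      fun N => ⟨mem_univ N, mem_univ P, mem_univ r, subset_closure hy⟩
  have hball : closedBall x (2 * √(ε * supNorm (ball 0 1) u)) ⊆ ball (0 : Eucl d) 1 :=
    closedBall_subset_ball' (by linarith [mem_ball.1 hx])
  obtain ⟨C, hC⟩ := hubdd
  exact supConv_is_subsolution_general isOpen_ball hF hC husub hε hball hM
    hexp.hasSuperjetAt ha hmax

end
end
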